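/- Let δ be a positive integer, z₀, …, z_ν ∈ ℕ, and P(z₀, …, z_ν) = Σ_{i₀+⋯+i_ν ≤ δ} a_{i₀,…,i_ν} z₀^{i₀}⋯z_ν^{i_ν} with integer coefficients of absolute value at most L (L ∈ ℤ⁺). Let B be any integer with B > 2(1 + z₀ + ⋯ + z_ν)^δ δ! L, and define C(x) = (1 + Σ_{i=0}^ν zᵢx^{(δ+1)^i})^δ and D(x) = Σ i₀!⋯i_ν!(δ−Σi_j)! a_{i₀,…,i_ν} x^{(δ+1)^{ν+1} − Σ_j i_j(δ+1)^j}. Then P(z₀, …, z_ν) = 0 if and only if there exists an integer z with (2C(B)D(B) − B^{(δ+1)^{ν+1}})/(2B^{(δ+1)^{ν+1}+1}) ≤ z ≤ (2C(B)D(B) + B^{(δ+1)^{ν+1}})/(2B^{(δ+1)^{ν+1}+1}). -/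

import Mathlib

/-!
Under the Kronecker substitution the monomials of degree at most `δ` get distinct exponents, so by
the multinomial theorem the coefficients of `C` are `δ! / (∏ iⱼ! (δ - ∑ iⱼ)!) * ∏ zⱼ ^ iⱼ`. The
exponents of `D` are the complements to `N = (δ + 1) ^ (ν + 1)`, and its factorials clear the
denominators; hence the coefficient of `x ^ N` in `C * D` is `δ! * P(z₀, …, z_ν)`. All coefficients
of `C * D` are smaller than `B / 2` in absolute value, so they are the balanced base-`B` digits of
`C(B) D(B)`, and the digit at position `N` vanishes exactly when `C(B) D(B)` lies within `B ^ N / 2`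
of a multiple of `B ^ (N + 1)`.
-/

open Polynomial Finset
open scoped Nat

section BalancedDigits

theorem pow_dvd_eval_sub_sum_range {R : Type*} [CommRing R] (p : R[X]) (x : R) (n : ℕ) :
    x ^ n ∣ p.eval x - ∑ k ∈ range n, p.coeff k * x ^ k := by
  have hdvd : X ^ n ∣ p - ∑ k ∈ range n, C (p.coeff k) * X ^ k := by
    refine X_pow_dvd_iff.mpr fun d hd ↦ ?_
    simp [finsetSum_coeff, hd]
  simpa [eval_finsetSum] using eval_dvd (x := x) hdvd

theorem two_mul_abs_sum_mul_pow_lt {B : ℤ} {c : ℕ → ℤ} {n : ℕ} (hc : ∀ k < n, 2 * |c k| < B) :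
    2 * |∑ k ∈ range n, c k * B ^ k| < B ^ n := by
  induction n with
  | zero => simp
  | succ n ih =>
    have hlow := ih fun k hk ↦ hc k (by lia)
    have hB : 0 < B := by linarith [hc n n.lt_succ_self, abs_nonneg (c n)]
    calc 2 * |∑ k ∈ range (n + 1), c k * B ^ k|
        ≤ 2 * |∑ k ∈ range n, c k * B ^ k| + 2 * |c n| * B ^ n := by
          have := abs_add_le (∑ k ∈ range n, c k * B ^ k) (c n * B ^ n)
          rw [abs_mul, abs_of_pos (pow_pos hB n)] at this
          rw [sum_range_succ]
          linarith
      _ < B ^ n + (B - 1) * B ^ n :=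
          add_lt_add_of_lt_of_le hlow <| mul_le_mul_of_nonneg_right
            (Int.le_sub_one_of_lt (hc n n.lt_succ_self)) (pow_pos hB n).le
      _ = B ^ (n + 1) := by ring

theorem coeff_eq_zero_iff_exists_two_mul_abs_eval_sub_le {B : ℤ} {p : ℤ[X]} {n : ℕ}
    (hp : ∀ k ≤ n, 2 * |p.coeff k| < B) :
    p.coeff n = 0 ↔ ∃ v : ℤ, 2 * |p.eval B - v * B ^ (n + 1)| ≤ B ^ n := by
  obtain ⟨w, hw⟩ := pow_dvd_eval_sub_sum_range p B (n + 1)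
  have hlow := two_mul_abs_sum_mul_pow_lt fun k hk ↦ hp k (le_of_lt hk)
  rw [sum_range_succ] at hw
  set r := ∑ k ∈ range n, p.coeff k * B ^ k
  constructor
  · intro hn
    refine ⟨w, ?_⟩
    rw [hn] at hw
    rw [show p.eval B - w * B ^ (n + 1) = r by linarith]
    exact hlow.le
  · rintro ⟨v, hv⟩
    have hB : |p.coeff n| < B := by linarith [hp n le_rfl, abs_nonneg (p.coeff n)]
    have hpow : 0 < B ^ n := pow_pos ((abs_nonneg _).trans_lt hB) n
    have hsplit : (p.coeff n + (w - v) * B) * B ^ n = p.eval B - v * B ^ (n + 1) - r := by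
      linear_combination -hw
    have hsmall : |p.coeff n + (w - v) * B| * B ^ n < 1 * B ^ n := by
      rw [← abs_of_pos hpow, ← abs_mul, abs_of_pos hpow, hsplit]
      linarith [abs_sub (p.eval B - v * B ^ (n + 1)) r]
    have hzero : p.coeff n + (w - v) * B = 0 :=
      Int.abs_lt_one_iff.mp (lt_of_mul_lt_mul_right hsmall hpow.le)
    exact Int.eq_zero_of_abs_lt_dvd ⟨v - w, by linarith⟩ hB

end BalancedDigits

section SumsOfMonomials

variable {ι : Type*} {s : Finset ι}

theorem coeff_sum_C_mul_X_pow_pow {R : Type*} [CommSemiring R] [DecidableEq ι] (c : ι → R)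
    (e : ι → ℕ) (n m : ℕ) :
    ((∑ i ∈ s, C (c i) * X ^ e i) ^ n).coeff m =
      ∑ k ∈ s.piAntidiag n with ∑ i ∈ s, k i * e i = m,
        (Nat.multinomial s k : R) * ∏ i ∈ s, c i ^ k i := by
  have hmonomial (k : ι → ℕ) : (Nat.multinomial s k : R[X]) * ∏ i ∈ s, (C (c i) * X ^ e i) ^ k i =
      C (Nat.multinomial s k * ∏ i ∈ s, c i ^ k i) * X ^ ∑ i ∈ s, k i * e i := by
    simp [mul_pow, prod_mul_distrib, ← pow_mul, prod_pow_eq_pow_sum, mul_assoc, mul_comm (e _)]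
  simp only [sum_pow_eq_sum_piAntidiag, hmonomial, finsetSum_coeff, coeff_C_mul_X_pow, sum_filter,
    eq_comm (a := m)]

theorem coeff_mul_sum_C_mul_X_pow_sub {R : Type*} [CommSemiring R] (p : R[X]) (c : ι → R)
    {e : ι → ℕ} {n : ℕ} (he : ∀ i ∈ s, e i ≤ n) :
    (p * ∑ i ∈ s, C (c i) * X ^ (n - e i)).coeff n = ∑ i ∈ s, c i * p.coeff (e i) := by
  rw [mul_sum, finsetSum_coeff]
  refine sum_congr rfl fun i hi ↦ ?_
  rw [mul_left_comm, coeff_C_mul, coeff_mul_X_pow', if_pos (Nat.sub_le _ _),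
    Nat.sub_sub_self (he i hi)]

variable {R : Type*} [CommRing R] [LinearOrder R] [IsStrictOrderedRing R]

theorem abs_coeff_sum_C_mul_X_pow_le {c : ι → R} {e : ι → ℕ} {M : R} (he : Set.InjOn e s)
    (hM : 0 ≤ M) (hc : ∀ i ∈ s, |c i| ≤ M) (k : ℕ) :
    |(∑ i ∈ s, C (c i) * X ^ e i).coeff k| ≤ M := by
  simp only [finsetSum_coeff, coeff_C_mul_X_pow]
  by_cases hk : ∃ i ∈ s, e i = k
  · obtain ⟨i, hi, rfl⟩ := hk
    rw [sum_eq_single_of_mem i hi fun j hj hji ↦ if_neg fun h ↦ hji (he hj hi h.symm), if_pos rfl]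
    exact hc i hi
  · rw [sum_eq_zero fun i hi ↦ if_neg fun h ↦ hk ⟨i, hi, h.symm⟩, abs_zero]
    exact hM

theorem abs_coeff_sum_C_mul_X_pow_mul_le {q : R[X]} {M : R} (c : ι → R) (e : ι → ℕ)
    (hq : ∀ k, |q.coeff k| ≤ M) (k : ℕ) :
    |((∑ i ∈ s, C (c i) * X ^ e i) * q).coeff k| ≤ (∑ i ∈ s, |c i|) * M := by
  rw [sum_mul, finsetSum_coeff, sum_mul]
  refine (abs_sum_le_sum_abs _ _).trans (sum_le_sum fun i _ ↦ ?_)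
  rw [mul_assoc, coeff_C_mul, coeff_X_pow_mul', abs_mul]
  refine mul_le_mul_of_nonneg_left ?_ (abs_nonneg _)
  split_ifs
  · exact hq _
  · simpa using (abs_nonneg _).trans (hq 0)

theorem abs_coeff_sum_C_mul_X_pow_pow_mul_le {q : R[X]} {M : R} (c : ι → R) (e : ι → ℕ)
    (hq : ∀ k, |q.coeff k| ≤ M) (n k : ℕ) :
    |((∑ i ∈ s, C (c i) * X ^ e i) ^ n * q).coeff k| ≤ (∑ i ∈ s, |c i|) ^ n * M := by
  induction n generalizing k with
  | zero => simpa using hq k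
  | succ n ih => simpa only [pow_succ', mul_assoc] using abs_coeff_sum_C_mul_X_pow_mul_le c e ih k

end SumsOfMonomials

section KroneckerCoding

variable {n δ : ℕ}

/-- The exponent vector of the homogenization, in degree `δ`, of the monomial with exponents `k`:
the extra index `none` receives the missing degree. The subtraction truncates, so this is meaningful
only when `∑ j, k j ≤ δ`. -/
def homogenizedExponent (δ : ℕ) (k : Fin n → ℕ) : Option (Fin n) → ℕ
  | none => δ - ∑ j, k j
  | some j => k j

/-- The product `i₀! ⋯ i_ν! (δ - ∑ iⱼ)!`, the denominator of the multinomial coefficient of the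
monomial with exponents `k` in `(1 + ∑ zⱼ) ^ δ`. -/
def factorialWeight (δ : ℕ) (k : Fin n → ℕ) : ℕ :=
  (∏ j, (k j)!) * (δ - ∑ j, k j)!

/-- The polynomial `C` of the paper, encoding the point `z`; its variables `zⱼ` are tagged by
`X ^ (δ + 1) ^ j`, as in Kronecker substitution. -/
noncomputable def pointPolynomial {R : Type*} [CommSemiring R] (δ : ℕ) (z : Fin n → R) : R[X] :=
  (1 + ∑ j, C (z j) * X ^ (δ + 1) ^ (j : ℕ)) ^ δ

/-- The polynomial `D` of the paper, encoding the coefficients `a` of `P`, with the exponents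
of `pointPolynomial` reversed at `(δ + 1) ^ n`. The total-degree bound on `P` is not built in: it is
the condition that `a i = 0` as soon as `δ < ∑ j, i j`, where `factorialWeight` truncates. -/
noncomputable def coefficientPolynomial {R : Type*} [CommSemiring R]
    (a : (Fin n → Fin (δ + 1)) → R) : R[X] :=
  ∑ i, C ((factorialWeight δ fun j ↦ (i j : ℕ) : ℕ) * a i) *
    X ^ ((δ + 1) ^ n - ∑ j, (i j : ℕ) * (δ + 1) ^ (j : ℕ))

theorem sum_homogenizedExponent {k : Fin n → ℕ} (hk : ∑ j, k j ≤ δ) :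
    ∑ o, homogenizedExponent δ k o = δ := by
  simp only [Fintype.sum_option, homogenizedExponent]
  lia

theorem prod_factorial_homogenizedExponent (δ : ℕ) (k : Fin n → ℕ) :
    ∏ o, (homogenizedExponent δ k o)! = factorialWeight δ k := by
  simp only [Fintype.prod_option, homogenizedExponent, factorialWeight, mul_comm]

theorem eq_homogenizedExponent {m : Option (Fin n) → ℕ} (hm : ∑ o, m o = δ) :
    m = homogenizedExponent δ fun j ↦ m (some j) := by
  rw [Fintype.sum_option] at hm
  funext o
  cases o <;> simp only [homogenizedExponent]
  lia

theorem factorialWeight_mul_multinomial {k : Fin n → ℕ} (hk : ∑ j, k j ≤ δ) :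
    factorialWeight δ k * Nat.multinomial univ (homogenizedExponent δ k) = δ ! := by
  rw [← prod_factorial_homogenizedExponent, Nat.multinomial_spec, sum_homogenizedExponent hk]

theorem factorialWeight_le_factorial {k : Fin n → ℕ} (hk : ∑ j, k j ≤ δ) :
    factorialWeight δ k ≤ δ ! :=
  Nat.le_of_dvd δ.factorial_pos ⟨_, (factorialWeight_mul_multinomial hk).symm⟩

theorem sum_mul_pow_lt_pow {b : ℕ} (i : Fin n → Fin b) :
    ∑ j, (i j : ℕ) * b ^ (j : ℕ) < b ^ n := by
  rw [← finFunctionFinEquiv_apply]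
  exact (finFunctionFinEquiv i).isLt

theorem injective_sum_mul_pow (b n : ℕ) :
    Function.Injective fun i : Fin n → Fin b ↦ ∑ j, (i j : ℕ) * b ^ (j : ℕ) := by
  simpa only [← finFunctionFinEquiv_apply] using!
    Fin.val_injective.comp finFunctionFinEquiv.injective

theorem pointPolynomial_eq_sum_pow {R : Type*} [CommSemiring R] (δ : ℕ) (z : Fin n → R) :
    pointPolynomial δ z =
      (∑ o : Option (Fin n), C (o.elim 1 z) * X ^ o.elim 0 fun j ↦ (δ + 1) ^ (j : ℕ)) ^ δ := by
  simp [pointPolynomial, Fintype.sum_option]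

theorem eq_homogenizedExponent_of_sum_mul_pow_eq {m : Option (Fin n) → ℕ} (hm : ∑ o, m o = δ)
    {i : Fin n → Fin (δ + 1)}
    (h : ∑ j, m (some j) * (δ + 1) ^ (j : ℕ) = ∑ j, (i j : ℕ) * (δ + 1) ^ (j : ℕ)) :
    m = homogenizedExponent δ fun j ↦ (i j : ℕ) := by
  have hlt (j : Fin n) : m (some j) < δ + 1 :=
    Nat.lt_succ_of_le (hm ▸ single_le_sum_of_canonicallyOrdered (mem_univ (some j)))
  have hi : (fun j ↦ ⟨m (some j), hlt j⟩) = i := injective_sum_mul_pow (δ + 1) n h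
  subst hi
  exact eq_homogenizedExponent hm

theorem coeff_pointPolynomial {R : Type*} [CommSemiring R] (z : Fin n → R)
    {i : Fin n → Fin (δ + 1)} (hi : ∑ j, (i j : ℕ) ≤ δ) :
    (pointPolynomial δ z).coeff (∑ j, (i j : ℕ) * (δ + 1) ^ (j : ℕ)) =
      Nat.multinomial univ (homogenizedExponent δ fun j ↦ (i j : ℕ)) *
        ∏ j, z j ^ (i j : ℕ) := by
  rw [pointPolynomial_eq_sum_pow, coeff_sum_C_mul_X_pow_pow,
    sum_eq_single_of_mem (homogenizedExponent δ fun j ↦ (i j : ℕ))]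
  · simp [Fintype.prod_option, homogenizedExponent]
  · simp [Fintype.sum_option, sum_homogenizedExponent hi, homogenizedExponent]
  · intro m hm hne
    rw [mem_filter, mem_piAntidiag] at hm
    refine absurd (eq_homogenizedExponent_of_sum_mul_pow_eq hm.1.1 ?_) hne
    simpa [Fintype.sum_option] using hm.2

theorem coeff_pointPolynomial_mul_coefficientPolynomial {R : Type*} [CommSemiring R]
    (z : Fin n → R) {a : (Fin n → Fin (δ + 1)) → R} (ha : ∀ i, δ < ∑ j, (i j : ℕ) → a i = 0) :
    (pointPolynomial δ z * coefficientPolynomial a).coeff ((δ + 1) ^ n) =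
      δ ! * ∑ i, a i * ∏ j, z j ^ (i j : ℕ) := by
  rw [coefficientPolynomial, coeff_mul_sum_C_mul_X_pow_sub _ _ fun i _ ↦ (sum_mul_pow_lt_pow i).le,
    mul_sum]
  refine sum_congr rfl fun i _ ↦ ?_
  rcases lt_or_ge δ (∑ j, (i j : ℕ)) with hi | hi
  · simp [ha i hi]
  · rw [coeff_pointPolynomial z hi, ← factorialWeight_mul_multinomial hi, Nat.cast_mul]
    ring

variable {R : Type*} [CommRing R] [LinearOrder R] [IsStrictOrderedRing R]

theorem abs_coeff_coefficientPolynomial_le {a : (Fin n → Fin (δ + 1)) → R} {L : R}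
    (ha : ∀ i, δ < ∑ j, (i j : ℕ) → a i = 0) (haL : ∀ i, |a i| ≤ L) (k : ℕ) :
    |(coefficientPolynomial a).coeff k| ≤ δ ! * L := by
  have hL : 0 ≤ L := (abs_nonneg _).trans (haL 0)
  refine abs_coeff_sum_C_mul_X_pow_le ?_ (by positivity) (fun i _ ↦ ?_) k
  · exact fun i _ i' _ h ↦ injective_sum_mul_pow (δ + 1) n <|
      (tsub_right_inj (sum_mul_pow_lt_pow i).le (sum_mul_pow_lt_pow i').le).mp h
  · rcases lt_or_ge δ (∑ j, (i j : ℕ)) with hi | hi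
    · simp only [ha i hi, mul_zero, abs_zero]
      positivity
    · rw [abs_mul, Nat.abs_cast]
      gcongr
      exacts [factorialWeight_le_factorial hi, haL i]

theorem abs_coeff_pointPolynomial_mul_le {q : R[X]} {M : R} (z : Fin n → R)
    (hq : ∀ k, |q.coeff k| ≤ M) (k : ℕ) :
    |(pointPolynomial δ z * q).coeff k| ≤ (1 + ∑ j, |z j|) ^ δ * M := by
  simpa [pointPolynomial_eq_sum_pow, Fintype.sum_option] using
    abs_coeff_sum_C_mul_X_pow_pow_mul_le (s := univ) (fun o : Option (Fin n) ↦ o.elim 1 z)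
      (fun o ↦ o.elim 0 fun j ↦ (δ + 1) ^ (j : ℕ)) hq δ k

end KroneckerCoding

theorem two_mul_abs_sub_mul_le_iff {K : Type*} [Field K] [LinearOrder K] [IsStrictOrderedRing K]
    {m : K} (hm : 0 < m) (s t v : K) :
    2 * |s - v * m| ≤ t ↔ (2 * s - t) / (2 * m) ≤ v ∧ v ≤ (2 * s + t) / (2 * m) := by
  rw [div_le_iff₀ (by positivity), le_div_iff₀ (by positivity), ← le_div_iff₀' two_pos, abs_le]
  constructor <;> rintro ⟨h₁, h₂⟩ <;> constructor <;> linarith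

theorem P_eq_zero_iff_interval_general {n δ : ℕ} {L B : ℤ} (z : Fin n → ℤ)
    {a : (Fin n → Fin (δ + 1)) → ℤ} (ha : ∀ i, δ < ∑ j, (i j : ℕ) → a i = 0)
    (haL : ∀ i, |a i| ≤ L) (hB : 2 * (1 + ∑ j, |z j|) ^ δ * δ ! * L < B) :
    ∑ i, a i * ∏ j, z j ^ (i j : ℕ) = 0 ↔
      ∃ v : ℤ,
        ((2 * (pointPolynomial δ z).eval B * (coefficientPolynomial a).eval B
          - B ^ (δ + 1) ^ n : ℤ) : ℚ) / ((2 * B ^ ((δ + 1) ^ n + 1) : ℤ) : ℚ) ≤ v ∧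
        v ≤ ((2 * (pointPolynomial δ z).eval B * (coefficientPolynomial a).eval B
          + B ^ (δ + 1) ^ n : ℤ) : ℚ) / ((2 * B ^ ((δ + 1) ^ n + 1) : ℤ) : ℚ) := by
  have hcoeff (k : ℕ) : 2 * |(pointPolynomial δ z * coefficientPolynomial a).coeff k| < B := by
    linarith [abs_coeff_pointPolynomial_mul_le (δ := δ) z
      (abs_coeff_coefficientPolynomial_le ha haL) k]
  have hBpos : (0 : ℚ) < B := by
    exact_mod_cast (mul_nonneg zero_le_two (abs_nonneg _)).trans_lt (hcoeff 0)
  have hdigit := coeff_eq_zero_iff_exists_two_mul_abs_eval_sub_le (n := (δ + 1) ^ n) fun k _ ↦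
    hcoeff k
  rw [coeff_pointPolynomial_mul_coefficientPolynomial z ha, mul_eq_zero,
    or_iff_right (Nat.cast_ne_zero.mpr δ.factorial_ne_zero), eval_mul] at hdigit
  refine hdigit.trans (exists_congr fun v ↦ ?_)
  push_cast [mul_assoc]
  rw [← two_mul_abs_sub_mul_le_iff (by positivity)]
  norm_cast

open Polynomial in
theorem P_eq_zero_iff_interval (δ ν : ℕ) (hδ : 0 < δ) (L : ℤ) (hL : 0 < L)
    (z : Fin (ν+1) → ℕ)
    (a : (Fin (ν+1) → Fin (δ+1)) → ℤ)
    (ha0 : ∀ i, δ < ∑ j, (i j : ℕ) → a i = 0)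
    (haL : ∀ i, |a i| ≤ L)
    (B : ℤ)
    (hB : 2 * (1 + ∑ j, (z j : ℤ)) ^ δ * (Nat.factorial δ : ℤ) * L < B)
    (C D : ℤ[X])
    (hC : C = (1 + ∑ j : Fin (ν+1), Polynomial.C (z j : ℤ) * X ^ ((δ+1) ^ (j : ℕ))) ^ δ)
    (hD : D = ∑ i : Fin (ν+1) → Fin (δ+1),
        Polynomial.C (((∏ j, Nat.factorial (i j)) *
            Nat.factorial (δ - ∑ j, (i j : ℕ)) : ℕ) * a i) *
          X ^ ((δ+1) ^ (ν+1) - ∑ j : Fin (ν+1), (i j : ℕ) * (δ+1) ^ (j : ℕ))) :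
    (∑ i : Fin (ν+1) → Fin (δ+1), a i * ∏ j, (z j : ℤ) ^ (i j : ℕ)) = 0 ↔
      ∃ zz : ℤ,
        ((2 * C.eval B * D.eval B - B ^ ((δ+1) ^ (ν+1)) : ℤ) : ℚ) /
            ((2 * B ^ ((δ+1) ^ (ν+1) + 1) : ℤ) : ℚ) ≤ (zz : ℚ) ∧
        (zz : ℚ) ≤ ((2 * C.eval B * D.eval B + B ^ ((δ+1) ^ (ν+1)) : ℤ) : ℚ) /
            ((2 * B ^ ((δ+1) ^ (ν+1) + 1) : ℤ) : ℚ) := by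
  subst hC hD
  exact P_eq_zero_iff_interval_general (fun j ↦ (z j : ℤ)) ha0 haL (by simpa using hB)
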